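/- arXiv:0812.1432 — 2 statements merged into one kernel-verified Lean document; each statement's English description precedes it below -/
import Mathlib

section
/- The quadratic polynomial ζ₁ is a singular vector of weight λ₁ for the E₇-action: D_i ζ₁ = 0 for every i = 1,…,7, and H_r ζ₁ = δ_{r,1}·ζ₁ for every r = 1,…,7 (i.e. H₁ζ₁ = ζ₁ and H_rζ₁ = 0 for r ≠ 1). -/
noncomputable section

open MvPolynomial
open scoped Fin.NatCast

abbrev Rp : Type := MvPolynomial (Fin 56) ℂ

/-- `xv i` is the variable `x_i` (1-based index). -/
def xv (i : ℕ) : Rp := X ((i - 1 : ℕ) : Fin 56)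

/-- The derivation `x_a ∂_b` (1-based indices). -/
def xd (a b : ℕ) (f : Rp) : Rp := xv a * pderiv ((b - 1 : ℕ) : Fin 56) f

def D1 (f : Rp) : Rp := -xd 6 8 f - xd 9 11 f - xd 10 13 f - xd 12 16 f - xd 14 19 f - xd 17 22 f + xd 35 40 f + xd 38 43 f + xd 41 45 f + xd 44 47 f + xd 46 48 f + xd 49 51 f

def D2 (f : Rp) : Rp := xd 5 7 f + xd 6 9 f + xd 8 11 f - xd 20 23 f - xd 24 26 f - xd 27 29 f - xd 28 30 f - xd 31 33 f - xd 34 37 f + xd 46 49 f + xd 48 51 f + xd 50 52 f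

def D3 (f : Rp) : Rp := -xd 5 6 f - xd 7 9 f - xd 13 15 f - xd 16 18 f - xd 19 21 f - xd 22 25 f + xd 32 35 f + xd 36 38 f + xd 39 41 f + xd 42 44 f + xd 48 50 f + xd 51 52 f

def D4 (f : Rp) : Rp := xd 4 5 f - xd 9 10 f - xd 11 13 f - xd 18 20 f - xd 21 24 f - xd 25 28 f - xd 29 32 f - xd 33 36 f - xd 37 39 f - xd 44 46 f - xd 47 48 f + xd 52 53 f

def D5 (f : Rp) : Rp := xd 3 4 f - xd 10 12 f - xd 13 16 f - xd 15 18 f - xd 24 27 f - xd 26 29 f - xd 28 31 f - xd 30 33 f - xd 39 42 f - xd 41 44 f - xd 45 47 f + xd 53 54 f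

def D6 (f : Rp) : Rp := xd 2 3 f - xd 12 14 f - xd 16 19 f - xd 18 21 f - xd 20 24 f - xd 23 26 f - xd 31 34 f - xd 33 37 f - xd 36 39 f - xd 38 41 f - xd 43 45 f + xd 54 55 f

def D7 (f : Rp) : Rp := xd 1 2 f - xd 14 17 f - xd 19 22 f - xd 21 25 f - xd 24 28 f - xd 26 30 f - xd 27 31 f - xd 29 33 f - xd 32 36 f - xd 35 38 f - xd 40 43 f + xd 55 56 f

def Dop : ℕ → Rp → Rp
  | 1, f => D1 f
  | 2, f => D2 f
  | 3, f => D3 f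
  | 4, f => D4 f
  | 5, f => D5 f
  | 6, f => D6 f
  | 7, f => D7 f
  | _, _ => 0

/-- The algebra automorphism `S` with `S(x_r) = x_{57-r}`. -/
def Sm : Rp → Rp := fun f => rename (fun j : Fin 56 => 55 - j) f

/-- `D̃ᵢ = S ∘ Dᵢ ∘ S`. -/
def Dtop (i : ℕ) (f : Rp) : Rp := Sm (Dop i (Sm f))

def aRows : List (List ℤ) :=
  [[0,0,0,0,0,0,1],
   [0,0,0,0,0,1,-1],
   [0,0,0,0,1,-1,0],
   [0,0,0,1,-1,0,0],
   [0,1,1,-1,0,0,0],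
   [1,1,-1,0,0,0,0],
   [0,-1,1,0,0,0,0],
   [-1,1,0,0,0,0,0],
   [1,-1,-1,1,0,0,0],
   [1,0,0,-1,1,0,0],
   [-1,-1,0,1,0,0,0],
   [1,0,0,0,-1,1,0],
   [-1,0,1,-1,1,0,0],
   [1,0,0,0,0,-1,1],
   [0,0,-1,0,1,0,0],
   [-1,0,1,0,-1,1,0],
   [1,0,0,0,0,0,-1],
   [0,0,-1,1,-1,1,0],
   [-1,0,1,0,0,-1,1],
   [0,1,0,-1,0,1,0],
   [0,0,-1,1,0,-1,1],
   [-1,0,1,0,0,0,-1],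
   [0,-1,0,0,0,1,0],
   [0,1,0,-1,1,-1,1],
   [0,0,-1,1,0,0,-1],
   [0,-1,0,0,1,-1,1],
   [0,1,0,0,-1,0,1],
   [0,1,0,-1,1,0,-1]]

def aTab (i r : ℕ) : ℤ := (aRows.getD (i - 1) []).getD (r - 1) 0

/-- The coroot actions `H_r`. -/
def Hop (r : ℕ) (f : Rp) : Rp :=
  ∑ i ∈ Finset.Icc 1 28, (aTab i r : ℂ) • (xd i i f - xd (57 - i) (57 - i) f)

def zz1 : Rp := xv 1 * xv 17 + xv 2 * xv 14 + xv 3 * xv 12 + xv 4 * xv 10 + xv 5 * xv 9 - xv 6 * xv 7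

def zz2 : Rp := Dtop 1 zz1

def zz3 : Rp := Dtop 3 zz2

def zz4 : Rp := Dtop 4 zz2

def zz5 : Rp := Dtop 2 zz4

def zz6 : Rp := Dtop 5 zz4

def zz7 : Rp := Dtop 2 zz6

def zz8 : Rp := Dtop 6 zz6

def zz9 : Rp := Dtop 7 zz8

def zz10 : Rp := Dtop 4 zz7

def zz11 : Rp := Dtop 2 zz8

def zz12 : Rp := Dtop 3 zz10

def zz13 : Rp := Dtop 2 zz9

def zz14 : Rp := Dtop 4 zz11

def zz15 : Rp := Dtop 4 zz13

def zz16 : Rp := Dtop 3 zz14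

def zz17 : Rp := Dtop 5 zz14

def zz18 : Rp := Dtop 3 zz15

def zz19 : Rp := Dtop 1 zz12

def zz20 : Rp := Dtop 7 zz17

def zz21 : Rp := Dtop 3 zz17

def zz22 : Rp := Dtop 6 zz20

def zz23 : Rp := Dtop 1 zz16

def zz24 : Rp := Dtop 5 zz18

def zz25 : Rp := Dtop 4 zz21

def zz26 : Rp := Dtop 1 zz18

def zz27 : Rp := Dtop 3 zz22

def zz28 : Rp := Dtop 1 zz21

def zz29 : Rp := Dtop 4 zz24

def zz30 : Rp := Dtop 1 zz25

def zz31 : Rp := Dtop 5 zz26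

def zz32 : Rp := Dtop 4 zz27

def zz33 : Rp := Dtop 2 zz25

def zz34 : Rp := Dtop 1 zz29

def zz35 : Rp := Dtop 1 zz27

def zz36 : Rp := Dtop 5 zz32

def zz37 : Rp := Dtop 3 zz30

def zz38 : Rp := Dtop 2 zz29

def zz39 : Rp := Dtop 1 zz32

def zz40 : Rp := Dtop 1 zz33

def zz41 : Rp := Dtop 1 zz34

def zz42 : Rp := Dtop 2 zz32

def zz43 : Rp := Dtop 1 zz36

def zz44 : Rp := Dtop 2 zz37

def zz45 : Rp := Dtop 1 zz38

def zz46 : Rp := Dtop 3 zz39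

def zz47 : Rp := Dtop 2 zz36

def zz48 : Rp := Dtop 4 zz44

def zz49 : Rp := Dtop 2 zz41

def zz50 : Rp := Dtop 1 zz42

def zz51 : Rp := Dtop 3 zz43

def zz52 : Rp := Dtop 4 zz47

def zz53 : Rp := Dtop 5 zz48

def zz54 : Rp := Dtop 4 zz49

def zz55 : Rp := Dtop 3 zz50

def zz56 : Rp := Dtop 1 zz47

def zz57 : Rp := Dtop 4 zz51

def zz58 : Rp := Dtop 3 zz52

def zz59 : Rp := Dtop 6 zz53

def zz60 : Rp := Dtop 5 zz54

def zz61 : Rp := Dtop 4 zz55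

def zz62 : Rp := Dtop 3 zz56

def zz63 : Rp := Dtop 1 zz52

def zz64 : Rp := Dtop 7 zz59

def zz65 : Rp := Dtop 6 zz60

def zz66 : Rp := Dtop 5 zz61

def zz67 : Rp := Dtop 4 zz62

def zz68 : Rp := Dtop 2 zz57

def zz69 : Rp := Dtop 3 zz63

def zz70 : Rp := Dtop 1 zz58

def zetaList : List Rp := [zz1, zz2, zz3, zz4, zz5, zz6, zz7, zz8, zz9, zz10, zz11, zz12, zz13, zz14, zz15, zz16, zz17, zz18, zz19, zz20, zz21, zz22, zz23, zz24, zz25, zz26, zz27, zz28, zz29, zz30, zz31, zz32, zz33, zz34, zz35, zz36, zz37, zz38, zz39, zz40, zz41, zz42, zz43, zz44, zz45, zz46, zz47, zz48, zz49, zz50, zz51, zz52, zz53, zz54, zz55, zz56, zz57, zz58, zz59, zz60, zz61, zz62, zz63, zz64, zz65, zz66, zz67, zz68, zz69, zz70]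

/-- `zeta j` is `ζ_j` for `1 ≤ j ≤ 133` (1-based). -/
def zeta (j : ℕ) : Rp :=
  if j ≤ 70 then zetaList.getD (j - 1) 0 else Sm (zetaList.getD (133 - j) 0)

/-- The quartic singular vector `ς` of weight `λ₆`. -/
def sigmaP : Rp := zeta 1 * zeta 19 - zeta 2 * zeta 12 + zeta 3 * zeta 10 - zeta 4 * zeta 7 + zeta 5 * zeta 6

/-- The cubic singular vector `ϑ` of weight `λ₇`. -/
def thetaP : Rp :=
  ((1 : ℂ)/2) • (xv 1 * zeta 64) - xv 2 * zeta 59 + xv 3 * zeta 53 - xv 4 * zeta 48 + xv 5 * zeta 44 - xv 6 * zeta 40 - xv 7 * zeta 37 + xv 8 * zeta 33 + xv 9 * zeta 30 + xv 10 * zeta 28 - xv 11 * zeta 25 + xv 12 * zeta 23 - xv 13 * zeta 21 + xv 14 * zeta 19 + xv 15 * zeta 17 - xv 16 * zeta 16 + xv 18 * zeta 14 - xv 19 * zeta 12 + xv 20 * zeta 11 + xv 21 * zeta 10 + xv 23 * zeta 8 + xv 24 * zeta 7 + xv 26 * zeta 6 + xv 27 * zeta 5 + xv 29 * zeta 4 +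 xv 32 * zeta 3 + xv 35 * zeta 2 + xv 40 * zeta 1

def IsetE7 : Finset ℕ := {1,2,3,5,6,9,10,11,12,15,17,18,19,21,22,26,27,28,29,33,34,35,36,40,41,42,43,44,50,51,52,53,54,55,58,63}

/-- Cartan's quartic `E₇`-invariant `η`. -/
def etaP : Rp :=
  4 * ((∑ i ∈ IsetE7, zeta i * zeta (134 - i)) -
        ∑ r ∈ Finset.Icc 1 63 \ IsetE7, zeta r * zeta (134 - r))
  + 4 * zeta 70 * (zeta 70 - 2 * zeta 68 - 3 * zeta 69 + 4 * zeta 67 - 3 * zeta 66 + 2 * zeta 65 - zeta 64)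
  + zeta 68 * (7 * zeta 68 + 16 * zeta 69 - 24 * zeta 67 + 18 * zeta 66 - 12 * zeta 65 + 6 * zeta 64)
  + 4 * zeta 69 * (3 * zeta 69 - 8 * zeta 67 + 6 * zeta 66 - 4 * zeta 65 + 2 * zeta 64)
  + 4 * zeta 67 * (6 * zeta 67 - 9 * zeta 66 + 6 * zeta 65 - 3 * zeta 64)
  + zeta 66 * (15 * zeta 66 - 20 * zeta 65 + 10 * zeta 64)
  + 8 * zeta 65 * (zeta 65 - zeta 64)
  + 3 * zeta 64 ^ 2

/-- The iterated partial derivative `∂^m = ∂₁^{m₁} ∘ ⋯ ∘ ∂₅₆^{m₅₆}`. -/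
def pdMulti (m : Fin 56 →₀ ℕ) (f : Rp) : Rp :=
  (List.finRange 56).foldr (fun i g => (fun h => pderiv i h)^[m i] g) f

/-- The constant-coefficient differential operator `𝒟` obtained from `η` by
replacing each variable by the corresponding partial derivative. -/
def Dcal (f : Rp) : Rp := ∑ m ∈ etaP.support, MvPolynomial.coeff m etaP • pdMulti m f

/-- The specialization `φ` killing `x₃, …, x₅₄`. -/
def phiP : Rp →ₐ[ℂ] Rp :=
  aeval (fun j : Fin 56 => if (j : ℕ) ≤ 1 ∨ 54 ≤ (j : ℕ) then X j else 0)

def edgesE7 : List (ℕ × ℕ) := [(1,3),(3,4),(2,4),(4,5),(5,6),(6,7)]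

/-- The Cartan matrix of `E₇` (Bourbaki-style labeling, node 2 attached to node 4). -/
def cartanE7 (i j : ℕ) : ℤ :=
  if i = j then 2 else if (i, j) ∈ edgesE7 ∨ (j, i) ∈ edgesE7 then -1 else 0

def epsE7 (i : ℕ) : ℤ := if i = 1 ∨ i = 3 then -1 else 1

/-!
The twelve variables occurring in `ζ₁` span the top piece of the grading of the 56-dimensional
module by the coefficient of `α₁`. The Levi subalgebra of type `D₆` with simple roots `α₂, …, α₇`
acts on this piece as on its vector representation, split into two dual isotropic 6-spaces, and
`ζ₁` is the invariant quadratic form, i.e. the dot product of the dual bases. Elements of `D₆`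
therefore kill `ζ₁`, and `E_{α₁}` kills the whole top piece. For the weight, dual basis vectors
have weights adding up to `λ₁`.
-/

section DotProduct

variable {R A ι : Type*} [CommRing R] [CommRing A] [Algebra R A] [Fintype ι]

open Matrix

lemma derivation_dotProduct (D : Derivation R A A) (x y : ι → A) :
    D (x ⬝ᵥ y) = (D ∘ x) ⬝ᵥ y + x ⬝ᵥ (D ∘ y) := by
  simp only [dotProduct, map_sum, Derivation.leibniz, smul_eq_mul, Finset.sum_add_distrib,
    Function.comp_apply, mul_comm (D _), add_comm]

lemma derivation_dotProduct_eq_zero_of_contragredient {D : Derivation R A A} {x y : ι → A}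
    (M : Matrix ι ι A) (hx : D ∘ x = x ᵥ* M) (hy : D ∘ y = -(M *ᵥ y)) : D (x ⬝ᵥ y) = 0 := by
  rw [derivation_dotProduct, hx, hy, dotProduct_neg, dotProduct_mulVec, add_neg_cancel]

lemma dotProduct_sub_transpose_mulVec_self (B : Matrix ι ι A) (x : ι → A) :
    x ⬝ᵥ ((B - Bᵀ) *ᵥ x) = 0 := by
  rw [sub_mulVec, dotProduct_sub, mulVec_transpose, dotProduct_mulVec, dotProduct_comm x, sub_self]

lemma derivation_dotProduct_eq_zero_of_skew {D : Derivation R A A} {x y : ι → A}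
    (B : Matrix ι ι A) (hx : D ∘ x = 0) (hy : D ∘ y = (B - Bᵀ) *ᵥ x) : D (x ⬝ᵥ y) = 0 := by
  rw [derivation_dotProduct, hx, hy, zero_dotProduct, dotProduct_sub_transpose_mulVec_self,
    add_zero]

lemma derivation_dotProduct_eq_smul {D : Derivation R A A} {x y : ι → A} {a b : ι → R} {c : R}
    (hx : ∀ k, D (x k) = a k • x k) (hy : ∀ k, D (y k) = b k • y k) (hab : ∀ k, a k + b k = c) :
    D (x ⬝ᵥ y) = c • (x ⬝ᵥ y) := by
  simp only [dotProduct, map_sum, Derivation.leibniz, hx, hy, Finset.smul_sum]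
  refine Finset.sum_congr rfl fun k _ => ?_
  rw [← hab k, smul_eq_mul, smul_eq_mul, mul_smul_comm, mul_smul_comm, mul_comm (y k), add_comm,
    add_smul]

end DotProduct

lemma xd_xv (a : ℕ) {b k : ℕ} (hb : b ∈ Finset.Icc 1 56) (hk : k ∈ Finset.Icc 1 56) :
    xd a b (xv k) = if b = k then xv a else 0 := by
  rw [Finset.mem_Icc] at hb hk
  have index_eq_iff : ((k - 1 : ℕ) : Fin 56) = ((b - 1 : ℕ) : Fin 56) ↔ b = k := by
    rw [Fin.ext_iff, Fin.val_natCast, Fin.val_natCast]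
    lia
  simp only [xd, xv, pderiv_X, Pi.single_apply, index_eq_iff, mul_ite, mul_one, mul_zero]

lemma xd_neg (a b : ℕ) (f : Rp) : xd a b (-f) = -xd a b f := by
  simp only [xd, map_neg, mul_neg]

lemma Dop_add (i : ℕ) (f g : Rp) : Dop i (f + g) = Dop i f + Dop i g := by
  unfold Dop
  split <;> simp only [D1, D2, D3, D4, D5, D6, D7, xd, map_add, add_zero] <;> ring

lemma Dop_smul (i : ℕ) (c : ℂ) (f : Rp) : Dop i (c • f) = c • Dop i f := by
  unfold Dop
  split <;> simp only [D1, D2, D3, D4, D5, D6, D7, xd, Derivation.map_smul, mul_smul_comm,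
    smul_add, smul_sub, smul_neg, smul_zero]

lemma Dop_mul (i : ℕ) (f g : Rp) : Dop i (f * g) = f * Dop i g + g * Dop i f := by
  unfold Dop
  split <;> simp only [D1, D2, D3, D4, D5, D6, D7, xd, Derivation.leibniz, smul_eq_mul,
    mul_zero, add_zero] <;> ring

/-- The action `Dop i` of the simple root vector `E_{αᵢ}`, bundled as a derivation. -/
def rootDerivation (i : ℕ) : Derivation ℂ Rp Rp :=
  Derivation.mk' { toFun := Dop i, map_add' := Dop_add i, map_smul' := Dop_smul i } (Dop_mul i)

lemma coe_rootDerivation (i : ℕ) : ⇑(rootDerivation i) = Dop i := rfl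

/-- The derivation `x_a ∂_b` of `xd`, bundled. -/
def xdDerivation (a b : ℕ) : Derivation ℂ Rp Rp := xv a • pderiv ((b - 1 : ℕ) : Fin 56)

/-- The action `Hop r` of the simple coroot `α_r^∨`, bundled as a derivation. -/
def corootDerivation (r : ℕ) : Derivation ℂ Rp Rp :=
  ∑ i ∈ Finset.Icc 1 28, (aTab i r : ℂ) • (xdDerivation i i - xdDerivation (57 - i) (57 - i))

lemma coe_corootDerivation (r : ℕ) : ⇑(corootDerivation r) = Hop r := by
  funext f
  simp only [corootDerivation, Hop, ← Derivation.coeFnAddMonoidHom_apply, map_sum,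
    Finset.sum_apply]
  rfl

lemma corootDerivation_xv (r : ℕ) {k : ℕ} (hk : k ∈ Finset.Icc 1 28) :
    corootDerivation r (xv k) = (aTab k r : ℂ) • xv k := by
  have term_eq : ∀ i ∈ Finset.Icc 1 28,
      (aTab i r : ℂ) • (xd i i (xv k) - xd (57 - i) (57 - i) (xv k)) =
        if i = k then (aTab k r : ℂ) • xv k else 0 := by
    intro i hi
    rw [Finset.mem_Icc] at hi hk
    rw [xd_xv i (Finset.mem_Icc.2 (by lia)) (Finset.mem_Icc.2 (by lia)),
      xd_xv (57 - i) (Finset.mem_Icc.2 (by lia)) (Finset.mem_Icc.2 (by lia)),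
      if_neg (by lia : 57 - i ≠ k), sub_zero]
    split_ifs with h
    · rw [h]
    · exact smul_zero _
  rw [coe_corootDerivation, Hop, Finset.sum_congr rfl term_eq, Finset.sum_ite_eq', if_pos hk]

section D6Action

open Matrix

/-- Basis of one isotropic half of the vector representation of the Levi subalgebra `D₆`. The sign
of `x₆` makes `E_{α₃}, …, E_{α₇}` act by elementary matrices. -/
def d6Vector : Fin 6 → Rp := ![xv 1, xv 2, xv 3, xv 4, xv 5, -xv 6]

/-- The variables dual to `d6Vector` under the invariant form of `D₆`, in 1-based numbering. -/
def d6CovectorIndex : Fin 6 → ℕ := ![17, 14, 12, 10, 9, 7]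

/-- The dual basis of `d6Vector`, spanning the opposite isotropic half of the vector
representation. -/
def d6Covector (k : Fin 6) : Rp := xv (d6CovectorIndex k)

lemma zz1_eq_dotProduct : zz1 = d6Vector ⬝ᵥ d6Covector := by
  simp [zz1, d6Vector, d6Covector, d6CovectorIndex, dotProduct, Fin.sum_univ_six, sub_eq_add_neg]

lemma rootDerivation_one_d6Vector : rootDerivation 1 ∘ d6Vector = 0 := by
  funext k
  fin_cases k <;> simp [coe_rootDerivation, Dop, D1, d6Vector, xd_neg, xd_xv]

lemma rootDerivation_one_d6Covector : rootDerivation 1 ∘ d6Covector = 0 := by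
  funext k
  fin_cases k <;>
    simp [coe_rootDerivation, Dop, D1, d6Covector, d6CovectorIndex, xd_xv]

lemma rootDerivation_two_d6Vector : rootDerivation 2 ∘ d6Vector = 0 := by
  funext k
  fin_cases k <;> simp [coe_rootDerivation, Dop, D2, d6Vector, xd_neg, xd_xv]

lemma rootDerivation_two_d6Covector :
    rootDerivation 2 ∘ d6Covector =
      (single 5 4 1 - (single 5 4 1)ᵀ : Matrix (Fin 6) (Fin 6) Rp) *ᵥ d6Vector := by
  funext k
  fin_cases k <;>
    simp [coe_rootDerivation, Dop, D2, d6Covector, d6CovectorIndex, d6Vector, xd_xv, sub_mulVec,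
      single_mulVec]

lemma rootDerivation_seven_sub_d6Vector (k : Fin 5) :
    rootDerivation (7 - k) ∘ d6Vector = d6Vector ᵥ* single k.castSucc k.succ 1 := by
  funext j
  fin_cases k <;> fin_cases j <;>
    simp [coe_rootDerivation, Dop, D3, D4, D5, D6, D7, d6Vector, xd_neg, xd_xv,
      vecMul, dotProduct, single_apply]

lemma rootDerivation_seven_sub_d6Covector (k : Fin 5) :
    rootDerivation (7 - k) ∘ d6Covector = -(single k.castSucc k.succ 1 *ᵥ d6Covector) := by
  funext j
  fin_cases k <;> fin_cases j <;>
    simp [coe_rootDerivation, Dop, D3, D4, D5, D6, D7, d6Covector, d6CovectorIndex, xd_xv,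
      single_mulVec]

lemma Dop_zz1 {i : ℕ} (hi : i ∈ Finset.Icc 1 7) : Dop i zz1 = 0 := by
  rw [zz1_eq_dotProduct, ← coe_rootDerivation]
  rw [Finset.mem_Icc] at hi
  obtain rfl | rfl | h_chain : i = 1 ∨ i = 2 ∨ 3 ≤ i := by lia
  · rw [derivation_dotProduct, rootDerivation_one_d6Vector, rootDerivation_one_d6Covector,
      zero_dotProduct, dotProduct_zero, add_zero]
  · exact derivation_dotProduct_eq_zero_of_skew _ rootDerivation_two_d6Vector
      rootDerivation_two_d6Covector
  · obtain ⟨k, rfl⟩ : ∃ k : Fin 5, i = 7 - k := ⟨⟨7 - i, by lia⟩, by lia⟩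
    exact derivation_dotProduct_eq_zero_of_contragredient _ (rootDerivation_seven_sub_d6Vector k)
      (rootDerivation_seven_sub_d6Covector k)

lemma corootDerivation_d6Vector (r : ℕ) (k : Fin 6) :
    corootDerivation r (d6Vector k) = (aTab (k + 1) r : ℂ) • d6Vector k := by
  fin_cases k <;> simp [d6Vector, corootDerivation_xv]

lemma corootDerivation_d6Covector (r : ℕ) (k : Fin 6) :
    corootDerivation r (d6Covector k) = (aTab (d6CovectorIndex k) r : ℂ) • d6Covector k :=
  corootDerivation_xv r (by revert k; decide)

lemma aTab_add_aTab_d6CovectorIndex : ∀ r ∈ Finset.Icc 1 7, ∀ k : Fin 6,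
    aTab (k + 1) r + aTab (d6CovectorIndex k) r = if r = 1 then 1 else 0 := by
  decide

lemma Hop_zz1 {r : ℕ} (hr : r ∈ Finset.Icc 1 7) :
    Hop r zz1 = (if r = 1 then 1 else 0 : ℂ) • zz1 := by
  rw [zz1_eq_dotProduct, ← coe_corootDerivation]
  exact derivation_dotProduct_eq_smul (corootDerivation_d6Vector r) (corootDerivation_d6Covector r)
    fun k => mod_cast aTab_add_aTab_d6CovectorIndex r hr k

end D6Action

theorem zeta1_singular_vector :
    (∀ i ∈ Finset.Icc 1 7, Dop i zz1 = 0) ∧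
    (∀ r ∈ Finset.Icc 1 7, Hop r zz1 = if r = 1 then zz1 else 0) := by
  refine ⟨fun i hi => Dop_zz1 hi, fun r hr => ?_⟩
  rw [Hop_zz1 hr, ite_smul, one_smul, zero_smul]
end
end

section
/- The explicit operators satisfy the defining commutation relations of a representation of the E₇ Lie algebra: for all r, i ∈ {1,…,7}, H_r∘D_i − D_i∘H_r = G_{ri}·D_i as ℂ-linear operators on R; for all i ≠ j in {1,…,7}, D_i∘D̃_j − D̃_j∘D_i = 0; and for each i, D_i∘D̃_i − D̃_i∘D_i = ε_i·H_i, where (ε₁,…,ε₇) = (−1, 1, −1, 1, 1, 1, 1). -/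
noncomputable section

open MvPolynomial
open scoped Fin.NatCast

/-! The 56 variables span the minuscule representation of `E₇`. A linear vector field is the image
of a matrix under a Lie algebra homomorphism, so the relations only have to be checked in `gl₅₆`.
There each `Dᵢ` is a signed partial permutation matrix `Eᵢ` and `Hᵢ` is diagonal. The key point is
that reversing the order of the variables carries `Eᵢ` to `εᵢ Eᵢᵀ`, so `D̃ᵢ` is, up to the sign
`εᵢ`, the transpose of `Dᵢ`. What remains is combinatorics of the edges `x_b ↦ ± x_a` of the
crystal graph: an edge of colour `i` shifts the `r`-th weight by `G_{ri}`; edges of distinct colours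
sharing an endpoint close up to a square with compatible signs; and `Hᵢ` counts heads minus
tails. -/

attribute [local instance] LieRing.ofAssociativeRing

section LinearVectorField

variable {R σ : Type*} [CommRing R] [Fintype σ] [DecidableEq σ]

/-- The linear vector field `∑ A_{ab} x_a ∂_b` of a matrix `A`: the action of `gl(σ)` on polynomial
functions that extends its standard representation on the span of the variables. -/
def linearVectorField (σ R : Type*) [CommRing R] [Fintype σ] [DecidableEq σ] :
    Matrix σ σ R →ₗ⁅R⁆ Derivation R (MvPolynomial σ R) (MvPolynomial σ R) where
  toFun A := mkDerivation R fun b => ∑ a, A a b • X a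
  map_add' A B := derivation_ext fun b => by
    simp [mkDerivation_X, add_smul, Finset.sum_add_distrib]
  map_smul' c A := derivation_ext fun b => by
    simp [mkDerivation_X, mul_smul, Finset.smul_sum]
  map_lie' {A B} := derivation_ext fun b => by
    have comp_X (M N : Matrix σ σ R) :
        mkDerivation R (fun b => ∑ a, M a b • (X a : MvPolynomial σ R)) (∑ a, N a b • X a) =
          ∑ a, (M * N) a b • X a := by
      simp only [map_sum, Derivation.map_smul, mkDerivation_X, Finset.smul_sum, Matrix.mul_apply,
        Finset.sum_smul, smul_smul]
      rw [Finset.sum_comm]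
      simp only [mul_comm]
    simp only [Derivation.commutator_apply, mkDerivation_X, comp_X, Ring.lie_def,
      Matrix.sub_apply, sub_smul, Finset.sum_sub_distrib]

theorem linearVectorField_X (A : Matrix σ σ R) (b : σ) :
    linearVectorField σ R A (X b) = ∑ a, A a b • X a :=
  mkDerivation_X R _ b

theorem linearVectorField_single (a b : σ) (c : R) (f : MvPolynomial σ R) :
    linearVectorField σ R (Matrix.single a b c) f = c • (X a * pderiv b f) := by
  suffices linearVectorField σ R (Matrix.single a b c) = c • (X a : MvPolynomial σ R) • pderiv b by
    simp [this]
  refine derivation_ext fun k => ?_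
  by_cases h : b = k
  · subst h
    simp [linearVectorField_X, Matrix.single_apply, ite_smul]
  · simp [linearVectorField_X, h, pderiv_X_of_ne (Ne.symm h)]

theorem lie_linearVectorField_apply (A B : Matrix σ σ R) (f : MvPolynomial σ R) :
    linearVectorField σ R A (linearVectorField σ R B f) -
        linearVectorField σ R B (linearVectorField σ R A f) =
      linearVectorField σ R ⁅A, B⁆ f := by
  rw [LieHom.map_lie, Derivation.commutator_apply]

theorem rename_linearVectorField {τ : Type*} [Fintype τ] [DecidableEq τ] (e : σ ≃ τ)
    (A : Matrix σ σ R) (f : MvPolynomial σ R) :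
    rename e (linearVectorField σ R A f) = linearVectorField τ R (A.reindex e e) (rename e f) := by
  induction f using MvPolynomial.induction_on with
  | C r => simp [← algebraMap_eq]
  | add f g hf hg => simp only [map_add, hf, hg]
  | mul_X f b hf =>
    have hX : rename e (linearVectorField σ R A (X b)) =
        linearVectorField τ R (A.reindex e e) (rename e (X b)) := by
      simp [linearVectorField_X, ← e.sum_comp]
    simp only [Derivation.leibniz, map_add, map_mul, smul_eq_mul, hf, hX]

end LinearVectorField

/-- Integer matrices given by a list of entries, an entry `(a, b, c)` standing for `c • E_{ab}`.
Products, transposes and equality up to permutation are then decidable in practice. -/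
abbrev SparseIntMatrix (n : Type*) := List (n × n × ℤ)

namespace SparseIntMatrix

variable {m n : Type*} [DecidableEq n]

/-- The dense matrix, over any ring of scalars, of a sparse integer matrix. -/
def toMatrix (R : Type*) [Ring R] (L : SparseIntMatrix n) : Matrix n n R :=
  (L.map fun t => Matrix.single t.1 t.2.1 (t.2.2 : R)).sum

/-- Sparse matrix product. -/
def mul (L M : SparseIntMatrix n) : SparseIntMatrix n :=
  L.flatMap fun s => (M.filter (s.2.1 = ·.1)).map fun t => (s.1, t.2.1, s.2.2 * t.2.2)

/-- Sparse matrix transpose. -/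
def transpose (L : SparseIntMatrix n) : SparseIntMatrix n :=
  L.map fun t => (t.2.1, t.1, t.2.2)

/-- Sparse scalar multiple. -/
def smul (c : ℤ) (L : SparseIntMatrix n) : SparseIntMatrix n :=
  L.map fun t => (t.1, t.2.1, c * t.2.2)

/-- Sparse analogue of `Matrix.reindex e e`. -/
def reindex (e : n ≃ m) (L : SparseIntMatrix n) : SparseIntMatrix m :=
  L.map fun t => (e t.1, e t.2.1, t.2.2)

section Ring

variable {R : Type*} [Ring R]

theorem toMatrix_cons (t : n × n × ℤ) (L : SparseIntMatrix n) :
    toMatrix R (t :: L) = Matrix.single t.1 t.2.1 (t.2.2 : R) + toMatrix R L :=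
  List.sum_cons

theorem toMatrix_append (L M : SparseIntMatrix n) :
    toMatrix R (L ++ M) = toMatrix R L + toMatrix R M := by
  simp [toMatrix]

theorem toMatrix_congr_perm {L M : SparseIntMatrix n} (h : L.Perm M) :
    toMatrix R L = toMatrix R M :=
  (h.map _).sum_eq

theorem toMatrix_transpose (L : SparseIntMatrix n) :
    L.transpose.toMatrix R = (L.toMatrix R).transpose := by
  simp [toMatrix, transpose, Matrix.transpose_list_sum, Function.comp_def]

theorem toMatrix_smul (c : ℤ) (L : SparseIntMatrix n) :
    (smul c L).toMatrix R = (c : R) • L.toMatrix R := by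
  simp [toMatrix, smul, List.smul_sum, Function.comp_def]

theorem toMatrix_reindex [DecidableEq m] (e : n ≃ m) (L : SparseIntMatrix n) :
    (L.reindex e).toMatrix R = (L.toMatrix R).reindex e e := by
  induction L with
  | nil => simp [toMatrix, reindex]
  | cons t L ih =>
    have h : reindex e (t :: L) = (e t.1, e t.2.1, t.2.2) :: reindex e L := rfl
    rw [h, toMatrix_cons, toMatrix_cons, ih]
    simp [Matrix.submatrix_add]

theorem toMatrix_diagonal (L : List n) :
    toMatrix R (L.map fun a => (a, a, 1)) = Matrix.diagonal fun k => (L.count k : R) := by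
  induction L with
  | nil => simp [toMatrix]
  | cons a L ih =>
    rw [List.map_cons, toMatrix_cons, ih, ← Matrix.diagonal_single, Matrix.diagonal_add]
    congr 1
    ext k
    by_cases h : k = a
    · simp [h, add_comm]
    · simp [h, Ne.symm h]

variable [Fintype n]

theorem toMatrix_mul (L M : SparseIntMatrix n) :
    (L.mul M).toMatrix R = L.toMatrix R * M.toMatrix R := by
  have single_mul (s : n × n × ℤ) :
      toMatrix R ((M.filter (s.2.1 = ·.1)).map fun t => (s.1, t.2.1, s.2.2 * t.2.2)) =
        Matrix.single s.1 s.2.1 (s.2.2 : R) * M.toMatrix R := by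
    induction M with
    | nil => simp [toMatrix]
    | cons t M ih =>
      rw [toMatrix_cons, mul_add, ← ih]
      by_cases h : s.2.1 = t.1
      · simp [h, toMatrix_cons]
      · simp [h]
  induction L with
  | nil => simp [toMatrix, mul]
  | cons s L ih =>
    rw [toMatrix_cons, add_mul, ← ih, ← single_mul, ← toMatrix_append]
    rfl

end Ring

theorem lie_diagonal_toMatrix {R : Type*} [CommRing R] [Fintype n] {w : n → ℤ} {c : ℤ}
    {L : SparseIntMatrix n} (h : ∀ t ∈ L, w t.1 - w t.2.1 = c) :
    ⁅Matrix.diagonal fun k => (w k : R), L.toMatrix R⁆ = (c : R) • L.toMatrix R := by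
  have lie_single (a b : n) (x : R) :
      ⁅Matrix.diagonal fun k => (w k : R), Matrix.single a b x⁆ =
        ((w a - w b : ℤ) : R) • Matrix.single a b x := by
    ext k l
    simp only [Ring.lie_def, Matrix.sub_apply, Matrix.diagonal_mul, Matrix.mul_diagonal,
      Matrix.smul_apply, Matrix.single_apply, smul_eq_mul]
    split_ifs with hkl
    · obtain ⟨rfl, rfl⟩ := hkl
      push_cast
      ring
    · simp
  induction L with
  | nil => simp [toMatrix]
  | cons t L ih =>
    rw [List.forall_mem_cons] at h
    rw [toMatrix_cons, lie_add, lie_single, h.1, ih h.2, smul_add]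

end SparseIntMatrix

section ChevalleyGenerators

open SparseIntMatrix Matrix

/-- The entries of `Dᵢ`: a triple `(a, b, c)` is a term `c • x_a ∂_b`, with the paper's 1-based
indices. In the crystal graph of the representation it is an edge of colour `i`. -/
def crystalEdges : ℕ → List (ℕ × ℕ × ℤ)
  | 1 => [(6, 8, -1), (9, 11, -1), (10, 13, -1), (12, 16, -1), (14, 19, -1),
      (17, 22, -1), (35, 40, 1), (38, 43, 1), (41, 45, 1), (44, 47, 1),
      (46, 48, 1), (49, 51, 1)]
  | 2 => [(5, 7, 1), (6, 9, 1), (8, 11, 1), (20, 23, -1), (24, 26, -1),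
      (27, 29, -1), (28, 30, -1), (31, 33, -1), (34, 37, -1), (46, 49, 1),
      (48, 51, 1), (50, 52, 1)]
  | 3 => [(5, 6, -1), (7, 9, -1), (13, 15, -1), (16, 18, -1), (19, 21, -1),
      (22, 25, -1), (32, 35, 1), (36, 38, 1), (39, 41, 1), (42, 44, 1),
      (48, 50, 1), (51, 52, 1)]
  | 4 => [(4, 5, 1), (9, 10, -1), (11, 13, -1), (18, 20, -1), (21, 24, -1),
      (25, 28, -1), (29, 32, -1), (33, 36, -1), (37, 39, -1), (44, 46, -1),
      (47, 48, -1), (52, 53, 1)]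
  | 5 => [(3, 4, 1), (10, 12, -1), (13, 16, -1), (15, 18, -1), (24, 27, -1),
      (26, 29, -1), (28, 31, -1), (30, 33, -1), (39, 42, -1), (41, 44, -1),
      (45, 47, -1), (53, 54, 1)]
  | 6 => [(2, 3, 1), (12, 14, -1), (16, 19, -1), (18, 21, -1), (20, 24, -1),
      (23, 26, -1), (31, 34, -1), (33, 37, -1), (36, 39, -1), (38, 41, -1),
      (43, 45, -1), (54, 55, 1)]
  | 7 => [(1, 2, 1), (14, 17, -1), (19, 22, -1), (21, 25, -1), (24, 28, -1),
      (26, 30, -1), (27, 31, -1), (29, 33, -1), (32, 36, -1), (35, 38, -1),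
      (40, 43, -1), (55, 56, 1)]
  | _ => []

/-- The matrix of `Dᵢ` in sparse form, indexed by the variables. -/
def sparseChevalley (i : ℕ) : SparseIntMatrix (Fin 56) :=
  (crystalEdges i).map fun t => (((t.1 - 1 : ℕ) : Fin 56), ((t.2.1 - 1 : ℕ) : Fin 56), t.2.2)

/-- The weight of each variable under the coroot `H_r`. -/
def corootWeight (r : ℕ) : Fin 56 → ℤ :=
  ∑ i ∈ Finset.Icc 1 28, aTab i r •
    (Pi.single ((i - 1 : ℕ) : Fin 56) 1 - Pi.single ((57 - i - 1 : ℕ) : Fin 56) 1)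

theorem corootWeight_sub_of_mem_sparseChevalley :
    ∀ r ∈ Finset.Icc 1 7, ∀ i ∈ Finset.Icc 1 7, ∀ t ∈ sparseChevalley i,
      corootWeight r t.1 - corootWeight r t.2.1 = cartanE7 r i := by
  decide +kernel

theorem corootWeight_eq_count :
    ∀ i ∈ Finset.Icc 1 7, ∀ k,
      corootWeight i k = ((sparseChevalley i).map fun t => t.1).count k -
        ((sparseChevalley i).map fun t => t.2.1).count k := by
  decide +kernel

theorem sparseChevalley_reindex_revPerm :
    ∀ i ∈ Finset.Icc 1 7, ((sparseChevalley i).reindex Fin.revPerm).Perm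
      (smul (epsE7 i) (sparseChevalley i).transpose) := by
  decide +kernel

theorem sparseChevalley_mul_transpose_perm :
    ∀ i ∈ Finset.Icc 1 7, ∀ j ∈ Finset.Icc 1 7, i ≠ j →
      ((sparseChevalley i).mul (sparseChevalley j).transpose).Perm
        ((sparseChevalley j).transpose.mul (sparseChevalley i)) := by
  decide +kernel

theorem sparseChevalley_mul_transpose_self :
    ∀ i ∈ Finset.Icc 1 7, (sparseChevalley i).mul (sparseChevalley i).transpose =
      ((sparseChevalley i).map fun t => t.1).map fun a => (a, a, 1) := by
  decide +kernel

theorem sparseChevalley_transpose_mul_self :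
    ∀ i ∈ Finset.Icc 1 7, (sparseChevalley i).transpose.mul (sparseChevalley i) =
      ((sparseChevalley i).map fun t => t.2.1).map fun b => (b, b, 1) := by
  decide +kernel

variable (R : Type*) [CommRing R]

/-- The matrix of `Dᵢ` on the span of the variables. -/
def chevalleyMatrix (i : ℕ) : Matrix (Fin 56) (Fin 56) R :=
  (sparseChevalley i).toMatrix R

/-- The matrix of `H_r` on the span of the variables. -/
def corootMatrix (r : ℕ) : Matrix (Fin 56) (Fin 56) R :=
  diagonal fun k => (corootWeight r k : R)

variable {i j r : ℕ}

theorem lie_corootMatrix_chevalleyMatrix (hr : r ∈ Finset.Icc 1 7) (hi : i ∈ Finset.Icc 1 7) :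
    ⁅corootMatrix R r, chevalleyMatrix R i⁆ = (cartanE7 r i : R) • chevalleyMatrix R i :=
  lie_diagonal_toMatrix (corootWeight_sub_of_mem_sparseChevalley r hr i hi)

theorem lie_chevalleyMatrix_transpose_of_ne (hi : i ∈ Finset.Icc 1 7) (hj : j ∈ Finset.Icc 1 7)
    (hij : i ≠ j) : ⁅chevalleyMatrix R i, (chevalleyMatrix R j)ᵀ⁆ = 0 := by
  simp only [chevalleyMatrix, Ring.lie_def, ← toMatrix_transpose, ← toMatrix_mul]
  exact sub_eq_zero.2 (toMatrix_congr_perm (sparseChevalley_mul_transpose_perm i hi j hj hij))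

theorem lie_chevalleyMatrix_transpose_self (hi : i ∈ Finset.Icc 1 7) :
    ⁅chevalleyMatrix R i, (chevalleyMatrix R i)ᵀ⁆ = corootMatrix R i := by
  simp only [chevalleyMatrix, corootMatrix, Ring.lie_def, ← toMatrix_transpose, ← toMatrix_mul,
    sparseChevalley_mul_transpose_self i hi, sparseChevalley_transpose_mul_self i hi,
    toMatrix_diagonal, diagonal_sub, corootWeight_eq_count i hi]
  push_cast
  rfl

theorem reindex_revPerm_chevalleyMatrix (hi : i ∈ Finset.Icc 1 7) :
    (chevalleyMatrix R i).reindex Fin.revPerm Fin.revPerm =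
      (epsE7 i : R) • (chevalleyMatrix R i)ᵀ := by
  rw [chevalleyMatrix, ← toMatrix_reindex,
    toMatrix_congr_perm (sparseChevalley_reindex_revPerm i hi), toMatrix_smul, toMatrix_transpose]

theorem corootMatrix_eq_sum_single (r : ℕ) :
    corootMatrix R r = ∑ i ∈ Finset.Icc 1 28, (aTab i r : R) •
      (single ((i - 1 : ℕ) : Fin 56) ((i - 1 : ℕ) : Fin 56) 1 -
        single ((57 - i - 1 : ℕ) : Fin 56) ((57 - i - 1 : ℕ) : Fin 56) 1) := by
  ext k l
  by_cases h : k = l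
  · subst h
    simp [corootMatrix, corootWeight, Matrix.sum_apply, ← diagonal_single, Pi.single_apply]
  · simp [corootMatrix, Matrix.sum_apply, ← diagonal_single, h]

end ChevalleyGenerators

section Operators

variable {i : ℕ}

theorem Dop_eq_linearVectorField (hi : i ∈ Finset.Icc 1 7) (f : Rp) :
    Dop i f = linearVectorField (Fin 56) ℂ (chevalleyMatrix ℂ i) f := by
  have xd_eq (a b : ℕ) : X ((a - 1 : ℕ) : Fin 56) * pderiv ((b - 1 : ℕ) : Fin 56) f = xd a b f :=
    rfl
  obtain ⟨h1, h7⟩ := Finset.mem_Icc.1 hi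
  interval_cases i <;>
  · simp only [Dop, D1, D2, D3, D4, D5, D6, D7, chevalleyMatrix, sparseChevalley, crystalEdges,
      SparseIntMatrix.toMatrix, List.map_cons, List.map_nil, List.sum_cons, List.sum_nil, map_add,
      map_zero, Derivation.add_apply, Derivation.zero_apply, linearVectorField_single, xd_eq,
      Int.cast_neg, Int.cast_one, neg_smul, one_smul]
    abel

theorem Hop_eq_linearVectorField (r : ℕ) (f : Rp) :
    Hop r f = linearVectorField (Fin 56) ℂ (corootMatrix ℂ r) f := by
  have apply_sum (s : Finset ℕ) (D : ℕ → Derivation ℂ Rp Rp) : (∑ i ∈ s, D i) f = ∑ i ∈ s, D i f :=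
    (congrFun (map_sum Derivation.coeFnAddMonoidHom D s) f).trans (Finset.sum_apply f s _)
  simp only [corootMatrix_eq_sum_single, map_sum, map_smul, map_sub, apply_sum,
    Derivation.smul_apply, Derivation.sub_apply, linearVectorField_single, one_smul]
  rfl

theorem Sm_eq_rename_revPerm (f : Rp) : Sm f = rename Fin.revPerm f := by
  have sub_eq_rev : (fun j : Fin 56 => 55 - j) = Fin.revPerm := by decide
  rw [Sm, sub_eq_rev]

theorem Dtop_eq_linearVectorField (hi : i ∈ Finset.Icc 1 7) (f : Rp) :
    Dtop i f = (epsE7 i : ℂ) • linearVectorField (Fin 56) ℂ (chevalleyMatrix ℂ i).transpose f := by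
  have rev_rev : (Fin.revPerm : Fin 56 → Fin 56) ∘ Fin.revPerm = id := funext Fin.rev_rev
  rw [Dtop, Sm_eq_rename_revPerm, Sm_eq_rename_revPerm, Dop_eq_linearVectorField hi,
    rename_linearVectorField, rename_rename, rev_rev, rename_id_apply,
    reindex_revPerm_chevalleyMatrix ℂ hi, map_smul, Derivation.smul_apply]

theorem Dop_Dtop_sub_Dtop_Dop {j : ℕ} (hi : i ∈ Finset.Icc 1 7) (hj : j ∈ Finset.Icc 1 7) (f : Rp) :
    Dop i (Dtop j f) - Dtop j (Dop i f) =
      (epsE7 j : ℂ) •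
        linearVectorField (Fin 56) ℂ ⁅chevalleyMatrix ℂ i, (chevalleyMatrix ℂ j).transpose⁆ f := by
  simp only [Dop_eq_linearVectorField hi, Dtop_eq_linearVectorField hj, Derivation.map_smul,
    ← smul_sub, lie_linearVectorField_apply]

end Operators

theorem e7_commutation_relations :
    (∀ r ∈ Finset.Icc 1 7, ∀ i ∈ Finset.Icc 1 7, ∀ f : Rp,
        Hop r (Dop i f) - Dop i (Hop r f) = (cartanE7 r i : ℂ) • Dop i f) ∧
    (∀ i ∈ Finset.Icc 1 7, ∀ j ∈ Finset.Icc 1 7, i ≠ j → ∀ f : Rp,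
        Dop i (Dtop j f) - Dtop j (Dop i f) = 0) ∧
    (∀ i ∈ Finset.Icc 1 7, ∀ f : Rp,
        Dop i (Dtop i f) - Dtop i (Dop i f) = (epsE7 i : ℂ) • Hop i f) := by
  refine ⟨fun r hr i hi f => ?_, fun i hi j hj hij f => ?_, fun i hi f => ?_⟩
  · rw [Dop_eq_linearVectorField hi, Dop_eq_linearVectorField hi, Hop_eq_linearVectorField,
      Hop_eq_linearVectorField, lie_linearVectorField_apply,
      lie_corootMatrix_chevalleyMatrix ℂ hr hi, map_smul, Derivation.smul_apply]
  · rw [Dop_Dtop_sub_Dtop_Dop hi hj, lie_chevalleyMatrix_transpose_of_ne ℂ hi hj hij, map_zero,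
      Derivation.zero_apply, smul_zero]
  · rw [Dop_Dtop_sub_Dtop_Dop hi hi, lie_chevalleyMatrix_transpose_self ℂ hi,
      Hop_eq_linearVectorField]
end
end
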